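/- Every strictly convex hexagon (simple hexagon all of whose interior angles are strictly less than 180°) can be partitioned into two strictly convex quadrilaterals by one of its main diagonals, using no Steiner points. -/

import Mathlib

open scoped BigOperators

/-- Points in the plane. -/
abbrev Pt := ℝ × ℝ

/-- 2×2 determinant (cross product) of two plane vectors. -/
noncomputable def det2 (p q : Pt) : ℝ := p.1 * q.2 - p.2 * q.1

/-- Open half-plane strictly to the left of the directed line from `p` to `q`. -/
def Lhp (p q : Pt) : Set Pt := {x | 0 < det2 (q - p) (x - p)}

/-- Open half-plane strictly to the right of the directed line from `p` to `q`. -/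
def Rhp (p q : Pt) : Set Pt := {x | det2 (q - p) (x - p) < 0}

/-- The boundary of the polygon with vertices `v 0, …, v (n-1)`:
the union of its (cyclically consecutive) edges. -/
def polyBoundary {n : ℕ} [NeZero n] (v : Fin n → Pt) : Set Pt :=
  ⋃ i : Fin n, segment ℝ (v i) (v (i + 1))

/-- `v` describes a simple polygon: at least 3 distinct vertices, and two distinct
edges may only meet at a common endpoint. -/
def IsSimplePolygon {n : ℕ} [NeZero n] (v : Fin n → Pt) : Prop :=
  3 ≤ n ∧ Function.Injective v ∧
    ∀ i j : Fin n, i ≠ j →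
      segment ℝ (v i) (v (i + 1)) ∩ segment ℝ (v j) (v (j + 1)) ⊆
        ({v i, v (i + 1)} ∩ {v j, v (j + 1)} : Set Pt)

/-- The interior of the polygon: the union of the bounded connected components of the
complement of the boundary. -/
def polyInterior {n : ℕ} [NeZero n] (v : Fin n → Pt) : Set Pt :=
  {x | x ∉ polyBoundary v ∧
    Bornology.IsBounded (connectedComponentIn (polyBoundary v)ᶜ x)}

/-- The (closed) polygonal region: interior together with boundary. -/
def polyRegion {n : ℕ} [NeZero n] (v : Fin n → Pt) : Set Pt :=
  polyBoundary v ∪ polyInterior v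

/-- Twice the signed area of the polygon. -/
noncomputable def signedArea2 {n : ℕ} [NeZero n] (v : Fin n → Pt) : ℝ :=
  ∑ i : Fin n, det2 (v i) (v (i + 1))

/-- The vertices are listed in counterclockwise order. -/
def IsCCW {n : ℕ} [NeZero n] (v : Fin n → Pt) : Prop := 0 < signedArea2 v

/-- The vertex `v i` of a counterclockwise polygon is strictly convex
(interior angle strictly less than 180°). -/
def StrictlyConvexAt {n : ℕ} [NeZero n] (v : Fin n → Pt) (i : Fin n) : Prop :=
  0 < det2 (v i - v (i - 1)) (v (i + 1) - v i)

/-- The vertex `v i` of a counterclockwise polygon is reflex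
(interior angle greater than or equal to 180°). -/
def ReflexAt {n : ℕ} [NeZero n] (v : Fin n → Pt) (i : Fin n) : Prop :=
  det2 (v i - v (i - 1)) (v (i + 1) - v i) ≤ 0

/-- The wedge of vertex `v i`:  `L(v⁻, v) ∩ R(v⁺, v) ∩ interior P`. -/
def Wedge {n : ℕ} [NeZero n] (v : Fin n → Pt) (i : Fin n) : Set Pt :=
  Lhp (v (i - 1)) (v i) ∩ Rhp (v (i + 1)) (v i) ∩ polyInterior v

/-- `x` sees `y` inside the polygon `v`: the segment `xy` is contained in the region. -/
def Sees {n : ℕ} [NeZero n] (v : Fin n → Pt) (x y : Pt) : Prop :=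
  segment ℝ x y ⊆ polyRegion v

/-- The kernel of the polygon: the points of the region that see every point of it. -/
def polyKernel {n : ℕ} [NeZero n] (v : Fin n → Pt) : Set Pt :=
  {x ∈ polyRegion v | ∀ y ∈ polyRegion v, segment ℝ x y ⊆ polyRegion v}

/-- The open triangle on three points. -/
def openTriangle (a b c : Pt) : Set Pt := interior (convexHull ℝ {a, b, c})

/-- `a b c d` (in counterclockwise order) form a strictly convex quadrilateral. -/
def StrictConvexQuad (a b c d : Pt) : Prop :=
  0 < det2 (b - a) (c - b) ∧ 0 < det2 (c - b) (d - c) ∧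
    0 < det2 (d - c) (a - d) ∧ 0 < det2 (a - d) (b - a)

/-- The closed region of a quadrilateral cell. -/
noncomputable def quadSet (q : Pt × Pt × Pt × Pt) : Set Pt :=
  convexHull ℝ {q.1, q.2.1, q.2.2.1, q.2.2.2}

/-- The closed region of a triangular cell. -/
noncomputable def triSet (t : Pt × Pt × Pt) : Set Pt :=
  convexHull ℝ {t.1, t.2.1, t.2.2}

/-- The vertices of a quadrilateral cell. -/
noncomputable def quadVerts (q : Pt × Pt × Pt × Pt) : Finset Pt :=
  {q.1, q.2.1, q.2.2.1, q.2.2.2}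

/-- The vertices of a triangular cell. -/
noncomputable def triVerts (t : Pt × Pt × Pt) : Finset Pt :=
  {t.1, t.2.1, t.2.2}

/-- A strictly convex quadrangulation of a finite planar point set `S`:
a decomposition of `conv S` into strictly convex quadrilaterals and at most one
(nondegenerate) triangle, with pairwise disjoint interiors, whose vertex set contains
`S`, and such that no point of `S` is interior to a cell. -/
structure ConvexQuadrangulation (S : Finset Pt) where
  quads : Finset (Pt × Pt × Pt × Pt)
  tris : Finset (Pt × Pt × Pt)
  tris_card : tris.card ≤ 1
  quads_convex : ∀ q ∈ quads, StrictConvexQuad q.1 q.2.1 q.2.2.1 q.2.2.2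
  tris_nondeg : ∀ t ∈ tris, 0 < det2 (t.2.1 - t.1) (t.2.2 - t.2.1)
  covers : ((⋃ q ∈ quads, quadSet q) ∪ ⋃ t ∈ tris, triSet t) = convexHull ℝ (S : Set Pt)
  cells_disjoint : ((quadSet '' quads) ∪ (triSet '' tris)).Pairwise
    fun A B => interior A ∩ interior B = ∅
  verts_cover : (S : Set Pt) ⊆
    ((quads.biUnion quadVerts ∪ tris.biUnion triVerts : Finset Pt) : Set Pt)
  no_pt_in_quad_interior : ∀ q ∈ quads, ∀ p ∈ S, p ∉ interior (quadSet q)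
  no_pt_in_tri_interior : ∀ t ∈ tris, ∀ p ∈ S, p ∉ interior (triSet t)

/-- The Steiner points of a quadrangulation: vertices of the decomposition not in `S`. -/
noncomputable def steinerPoints (S : Finset Pt) (Q : ConvexQuadrangulation S) : Finset Pt :=
  (Q.quads.biUnion quadVerts ∪ Q.tris.biUnion triVerts) \ S

/-!
Suppose a simple path turns left at every vertex and, after its edge `pq`, stays in a convex set
`C` containing no point of the extension of `pq` beyond `p`. To cross the line `pq` again inside
`C` it would have to do so beyond `q`, hence on the wrong side of its next edge; but inside the
left half-plane of `pq` the next edge cannot be extended backwards either, so by induction this is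
impossible, and the path stays strictly to the left of `pq`.

In a simple polygon with convex vertices this applies, with `C` the convex hull, to an edge
starting at an extreme point of the hull, and then, with `C` the left half-plane of an edge, to the
edge after it. So every vertex lies strictly to the left of every edge not containing it: the
polygon bounds its convex hull, and any main diagonal of a hexagon cuts it into two strictly convex
quadrilaterals.
-/

/-! ### Affine forms and convex hulls -/

section Module

variable {E : Type*} [AddCommGroup E] [Module ℝ E]

theorem mem_convexHull_range {ι : Type*} (v : ι → E) (i : ι) : v i ∈ convexHull ℝ (Set.range v) :=
  subset_convexHull ℝ _ (Set.mem_range_self i)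

theorem exists_mem_segment_eq_zero {g : E →ᵃ[ℝ] ℝ} {x y : E} (hx : 0 ≤ g x)
    (hy : g y ≤ 0) : ∃ z ∈ segment ℝ x y, g z = 0 := by
  rw [← Set.mem_image, image_segment, segment_eq_uIcc]
  exact Set.mem_uIcc_of_ge hy hx

theorem convexHull_union_eq_union_of_zeros {g : E →ᵃ[ℝ] ℝ} {A B : Set E}
    (hA : ∀ x ∈ A, 0 ≤ g x) (hB : ∀ x ∈ B, g x ≤ 0)
    (hzero : ∀ z ∈ convexHull ℝ (A ∪ B), g z = 0 → z ∈ convexHull ℝ A ∩ convexHull ℝ B) :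
    convexHull ℝ (A ∪ B) = convexHull ℝ A ∪ convexHull ℝ B := by
  have hA' : ∀ x ∈ convexHull ℝ A, 0 ≤ g x :=
    convexHull_min hA ((convex_Ici 0).affine_preimage g)
  have hB' : ∀ x ∈ convexHull ℝ B, g x ≤ 0 :=
    convexHull_min hB ((convex_Iic 0).affine_preimage g)
  have hsub : convexHull ℝ A ∪ convexHull ℝ B ⊆ convexHull ℝ (A ∪ B) :=
    Set.union_subset (convexHull_mono Set.subset_union_left)
      (convexHull_mono Set.subset_union_right)
  have hcross : ∀ x ∈ convexHull ℝ A, ∀ y ∈ convexHull ℝ B,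
      openSegment ℝ x y ⊆ convexHull ℝ A ∪ convexHull ℝ B := by
    intro x hx y hy
    obtain ⟨z, hz, hgz⟩ := exists_mem_segment_eq_zero (hA' x hx) (hB' y hy)
    obtain ⟨hzA, hzB⟩ := hzero z ((convex_convexHull ℝ _).segment_subset
      (hsub (.inl hx)) (hsub (.inr hy)) hz) hgz
    have hzline : z ∈ Set.range (AffineMap.lineMap x y : ℝ → E) :=
      Set.image_subset_range _ _ (segment_eq_image_lineMap ℝ x y ▸ hz)
    exact (openSegment_subset_union x y hzline).trans <| Set.insert_subset (.inl hzA) <|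
      Set.union_subset_union ((convex_convexHull ℝ A).openSegment_subset hx hzA)
        ((convex_convexHull ℝ B).openSegment_subset hzB hy)
  refine (convexHull_min (Set.union_subset_union (subset_convexHull ℝ A)
    (subset_convexHull ℝ B)) ?_).antisymm hsub
  rw [convex_iff_openSegment_subset]
  rintro x (hx | hx) y (hy | hy)
  · exact ((convex_convexHull ℝ A).openSegment_subset hx hy).trans Set.subset_union_left
  · exact hcross x hx y hy
  · rw [openSegment_symm]
    exact hcross y hy x hx
  · exact ((convex_convexHull ℝ B).openSegment_subset hx hy).trans Set.subset_union_right

end Module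

theorem not_isBounded_setOf_lt {E : Type*} [NormedAddCommGroup E] [NormedSpace ℝ E]
    {φ : E →L[ℝ] ℝ} (hφ : φ ≠ 0) (u : ℝ) : ¬Bornology.IsBounded {y | u < φ y} := by
  intro hbdd
  have hsurj : Function.Surjective φ :=
    LinearMap.surjective_iff_ne_zero.2 fun h => hφ (ContinuousLinearMap.coe_injective h)
  have habove := (φ.lipschitz.isBounded_image hbdd).bddAbove
  rw [show φ '' {y | u < φ y} = Set.Ioi u from Set.image_preimage_eq _ hsurj] at habove
  exact not_bddAbove_Ioi u habove

theorem interior_inter_interior_eq_empty {X : Type*} [TopologicalSpace X] {g : X → ℝ}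
    (hg : IsOpenMap g) {A B : Set X} (hA : ∀ x ∈ A, 0 ≤ g x) (hB : ∀ x ∈ B, g x ≤ 0) :
    interior A ∩ interior B = ∅ := by
  have hzero : g '' (interior A ∩ interior B) ⊆ {0} := by
    rintro _ ⟨x, ⟨hxA, hxB⟩, rfl⟩
    exact (hB x (interior_subset hxB)).antisymm (hA x (interior_subset hxA))
  have hempty := interior_maximal hzero (hg _ (isOpen_interior.inter isOpen_interior))
  rwa [interior_singleton, Set.subset_empty_iff, Set.image_eq_empty] at hempty

/-! ### Signed area of a triangle -/

/-- Twice the signed area of the triangle `p q x`, as an affine function of `x`: it is positive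
strictly to the left of the directed line `p q` and, for `p ≠ q`, vanishes exactly on it. -/
noncomputable def side (p q : Pt) : Pt →ᵃ[ℝ] ℝ where
  toFun x := det2 (q - p) (x - p)
  linear := (q - p).1 • LinearMap.snd ℝ ℝ ℝ - (q - p).2 • LinearMap.fst ℝ ℝ ℝ
  map_vadd' x y := by
    simp only [det2, vadd_eq_add, Prod.fst_sub, Prod.snd_sub, Prod.fst_add, Prod.snd_add,
      LinearMap.sub_apply, LinearMap.smul_apply, LinearMap.fst_apply, LinearMap.snd_apply,
      smul_eq_mul]
    ring

theorem side_apply (p q x : Pt) :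
    side p q x = (q.1 - p.1) * (x.2 - p.2) - (q.2 - p.2) * (x.1 - p.1) := rfl

theorem side_self_left (p q : Pt) : side p q p = 0 := by rw [side_apply]; ring

theorem side_self_right (p q : Pt) : side p q q = 0 := by rw [side_apply]; ring

theorem side_rotate (p q r : Pt) : side p q r = side q r p := by
  simp only [side_apply]; ring

theorem side_swap (p q r : Pt) : side p q r = -side q p r := by
  simp only [side_apply]; ring

theorem det2_sub_sub (p q r : Pt) : det2 (q - p) (r - q) = side p q r := by
  simp only [side_apply, det2, Prod.fst_sub, Prod.snd_sub]; ring

theorem continuous_side (p q : Pt) : Continuous (side p q) :=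
  (side p q).continuous_of_finiteDimensional

theorem convex_setOf_side_nonneg (p q : Pt) : Convex ℝ {x | 0 ≤ side p q x} :=
  (convex_Ici 0).affine_preimage (side p q)

theorem ne_of_side_pos {p q r : Pt} (h : 0 < side p q r) : p ≠ q := by
  rintro rfl
  simp [side_apply] at h

theorem exists_side_ne_zero {p q : Pt} (hpq : p ≠ q) : ∃ x, side p q x ≠ 0 := by
  by_contra! h
  have hx := h (p + (1, 0))
  have hy := h (p + (0, 1))
  simp only [side_apply, Prod.fst_add, Prod.snd_add] at hx hy
  exact hpq (Prod.ext (by linarith) (by linarith))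

/-- Cramer's rule for `x - q` in the basis `r - q`, `p - q`. -/
theorem side_smul_sub (p q r x : Pt) :
    side p q r • (x - q) = side p q x • (r - q) + side q r x • (p - q) := by
  ext <;> simp only [side_apply, Prod.smul_fst, Prod.smul_snd, Prod.fst_add, Prod.snd_add,
    Prod.fst_sub, Prod.snd_sub, smul_eq_mul] <;> ring

theorem exists_lineMap_of_side_eq_zero {p q x : Pt} (hpq : p ≠ q) (hx : side p q x = 0) :
    ∃ t : ℝ, AffineMap.lineMap p q t = x := by
  obtain ⟨r, hr⟩ := exists_side_ne_zero hpq
  have hcramer : side q p r • (x - p) = side p r x • (q - p) := by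
    rw [side_smul_sub, side_swap q p x, hx, neg_zero, zero_smul, zero_add]
  refine ⟨(side q p r)⁻¹ * side p r x, ?_⟩
  rw [AffineMap.lineMap_apply_module', mul_smul, ← hcramer, inv_smul_smul₀, sub_add_cancel]
  rwa [side_swap, neg_ne_zero]

theorem isOpenMap_side {p q : Pt} (hpq : p ≠ q) : IsOpenMap (side p q) := by
  obtain ⟨x, hx⟩ := exists_side_ne_zero hpq
  refine (side p q).isOpenMap (continuous_side p q) fun y =>
    ⟨AffineMap.lineMap p x (y / side p q x), ?_⟩
  rw [AffineMap.apply_lineMap, AffineMap.lineMap_apply_ring, side_self_left, mul_zero, zero_add,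
    div_mul_cancel₀ y hx]

theorem mem_segment_of_affine_nonneg {p q z : Pt} (hz : side p q z = 0)
    {g h : Pt →ᵃ[ℝ] ℝ} (hgp : g p = 0) (hgq : 0 < g q) (hgz : 0 ≤ g z)
    (hhq : h q = 0) (hhp : 0 < h p) (hhz : 0 ≤ h z) : z ∈ segment ℝ p q := by
  have hpq : p ≠ q := by
    rintro rfl
    exact hgq.ne' hgp
  obtain ⟨t, rfl⟩ := exists_lineMap_of_side_eq_zero hpq hz
  rw [AffineMap.apply_lineMap, AffineMap.lineMap_apply_ring, hgp] at hgz
  rw [AffineMap.apply_lineMap, AffineMap.lineMap_apply_ring, hhq] at hhz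
  rw [segment_eq_image_lineMap]
  exact ⟨t, ⟨by nlinarith, by nlinarith⟩, rfl⟩

/-! ### Locally convex paths -/

/-- The polygonal path `f 0, …, f N` is simple and turns left at each of its inner vertices. -/
structure IsLeftTurningPath (f : ℕ → Pt) (N : ℕ) : Prop where
  injOn : Set.InjOn f (Set.Iic N)
  turn : ∀ k, k + 2 ≤ N → 0 < side (f k) (f (k + 1)) (f (k + 2))
  disjoint : ∀ a b, a + 1 < b → b + 1 ≤ N →
    Disjoint (segment ℝ (f a) (f (a + 1))) (segment ℝ (f b) (f (b + 1)))

theorem lineMap_le_one_of_side_nonneg {p q r : Pt} (hr : 0 < side p q r) {t : ℝ}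
    (ht : 0 ≤ side p q (AffineMap.lineMap r q t)) : t ≤ 1 := by
  rw [AffineMap.apply_lineMap, AffineMap.lineMap_apply_ring, side_self_right] at ht
  nlinarith

theorem side_pos_of_mem_segment {p q r y : Pt} (hr : 0 < side p q r) (hy : y ∈ segment ℝ q r)
    (hne : y ≠ q) : 0 < side p q y := by
  rw [segment_eq_image_lineMap] at hy
  obtain ⟨t, ht, rfl⟩ := hy
  have ht0 : t ≠ 0 := by
    rintro rfl
    exact hne (AffineMap.lineMap_apply_zero _ _)
  rw [AffineMap.apply_lineMap, AffineMap.lineMap_apply_ring, side_self_right, mul_zero, zero_add]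
  exact mul_pos (ht.1.lt_of_ne' ht0) hr

theorem mem_segment_of_side_eq_zero_of_turn {p q r x : Pt} (hr : 0 < side p q r)
    (hx : side p q x = 0) (hnext : 0 < side q r x)
    (hback : ∀ t : ℝ, AffineMap.lineMap q p t = x → t ≤ 1) : x ∈ segment ℝ p q := by
  obtain ⟨t, rfl⟩ := exists_lineMap_of_side_eq_zero (ne_of_side_pos hr).symm
    (by rw [side_swap, hx, neg_zero])
  rw [AffineMap.apply_lineMap, AffineMap.lineMap_apply_ring, side_self_left,
    ← side_rotate] at hnext
  rw [segment_symm, segment_eq_image_lineMap]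
  exact ⟨t, ⟨by nlinarith, hback t rfl⟩, rfl⟩

namespace IsLeftTurningPath

variable {f : ℕ → Pt} {N : ℕ}

/-- Induction on the number of edges in between, for all `C` at once: edge `i + 1` is treated with
the closed left half-plane of edge `i` as its `C`. -/
theorem side_pos (hf : IsLeftTurningPath f N) {C : Set Pt} (hC : Convex ℝ C) {i m : ℕ}
    (him : i + 1 ≤ m) (hmN : m + 1 ≤ N) (hfC : ∀ j, i + 2 ≤ j → j ≤ m → f j ∈ C)
    (hback : ∀ t : ℝ, AffineMap.lineMap (f (i + 1)) (f i) t ∈ C → t ≤ 1)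
    {y : Pt} (hy : y ∈ segment ℝ (f m) (f (m + 1))) (hyC : y ∈ C) (hne : y ≠ f (i + 1)) :
    0 < side (f i) (f (i + 1)) y := by
  have hturn := hf.turn i (by omega)
  obtain rfl | hlt := him.eq_or_lt
  · exact side_pos_of_mem_segment hturn hy hne
  by_contra! hneg
  have hpos : ∀ j, i + 2 ≤ j → j ≤ m → 0 < side (f i) (f (i + 1)) (f j) := by
    intro j hij hjm
    obtain ⟨k, rfl⟩ : ∃ k, j = k + 1 := ⟨j - 1, by omega⟩
    exact hf.side_pos hC (m := k) (by omega) (by omega)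
      (fun l hl hlk => hfC l hl (by omega)) hback (right_mem_segment ℝ _ _) (hfC _ hij hjm)
      (hf.injOn.ne (Set.mem_Iic.2 (by omega)) (Set.mem_Iic.2 (by omega)) (by omega))
  obtain ⟨x, hx, hside⟩ := exists_mem_segment_eq_zero (hpos m hlt le_rfl).le hneg
  have hxC : x ∈ C := hC.segment_subset (hfC m hlt le_rfl) hyC hx
  have hxm : x ∈ segment ℝ (f m) (f (m + 1)) :=
    (convex_segment _ _).segment_subset (left_mem_segment ℝ _ _) hy hx
  have hnext : 0 < side (f (i + 1)) (f (i + 2)) x :=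
    hf.side_pos (convex_setOf_side_nonneg (f i) (f (i + 1))) (i := i + 1) hlt hmN
      (fun j hj hjm => (hpos j (by omega) hjm).le)
      (fun t ht => lineMap_le_one_of_side_nonneg hturn ht) hxm hside.ge
      (by rintro rfl; exact hturn.ne' hside)
  refine (hf.disjoint i m hlt hmN).notMem_of_mem_left ?_ hxm
  exact mem_segment_of_side_eq_zero_of_turn hturn hside hnext fun t ht => hback t (ht ▸ hxC)
termination_by m - i

end IsLeftTurningPath

/-! ### Simple polygons with convex vertices -/

section

variable {n : ℕ} [NeZero n]

theorem add_ofNat_succ (i : Fin n) (k : ℕ) : i + Fin.ofNat n (k + 1) = i + Fin.ofNat n k + 1 := by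
  rw [add_assoc]
  congr 1
  ext
  simp [Fin.val_add]

theorem add_ofNat_injOn (i : Fin n) : Set.InjOn (fun k => i + Fin.ofNat n k) (Set.Iio n) := by
  intro k hk l hl hkl
  simpa [Fin.ext_iff, Nat.mod_eq_of_lt hk, Nat.mod_eq_of_lt hl] using add_left_cancel hkl

theorem exists_add_ofNat_eq (i j : Fin n) : ∃ k < n, i + Fin.ofNat n k = j :=
  ⟨(j - i).val, (j - i).isLt, by simp⟩

variable {v : Fin n → Pt}

theorem strictlyConvexAt_add_one {i : Fin n} :
    StrictlyConvexAt v (i + 1) ↔ 0 < side (v i) (v (i + 1)) (v (i + 1 + 1)) := by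
  rw [StrictlyConvexAt, add_sub_cancel_right, det2_sub_sub]

theorem IsSimplePolygon.disjoint_segment (h : IsSimplePolygon v) {i j : Fin n} (hij : i ≠ j)
    (hi : i + 1 ≠ j) (hj : j + 1 ≠ i) :
    Disjoint (segment ℝ (v i) (v (i + 1))) (segment ℝ (v j) (v (j + 1))) := by
  refine Set.disjoint_iff_inter_eq_empty.2 (Set.subset_empty_iff.1 ((h.2.2 i j hij).trans ?_))
  rintro x ⟨rfl | rfl, hx | hx⟩
  · exact hij (h.2.1 hx)
  · exact hj (h.2.1 hx).symm
  · exact hi (h.2.1 hx)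
  · exact hij (add_right_cancel (h.2.1 hx))

theorem IsSimplePolygon.isLeftTurningPath (h : IsSimplePolygon v)
    (hconv : ∀ i, StrictlyConvexAt v i) (i : Fin n) :
    IsLeftTurningPath (fun k => v (i + Fin.ofNat n k)) (n - 1) where
  injOn k hk l hl hkl := by
    have hlt : ∀ m ∈ Set.Iic (n - 1), m < n := fun m hm => Nat.lt_of_le_pred (NeZero.pos n) hm
    exact add_ofNat_injOn i (hlt k hk) (hlt l hl) (h.2.1 hkl)
  turn k _ := by
    simp only [add_ofNat_succ]
    exact strictlyConvexAt_add_one.1 (hconv _)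
  disjoint a b hab hb := by
    have hne : ∀ k l, k < l → l < n → i + Fin.ofNat n k ≠ i + Fin.ofNat n l := fun k l hkl hl =>
      (add_ofNat_injOn i).ne (hkl.trans hl) hl hkl.ne
    simp only [add_ofNat_succ]
    refine h.disjoint_segment (hne a b (by omega) (by omega)) ?_ ?_
    · rw [← add_ofNat_succ]
      exact hne _ _ hab (by omega)
    · rw [← add_ofNat_succ]
      exact (hne _ _ (by omega) (by omega)).symm

/-- Edge `i` of `v` has all the vertices other than its endpoints strictly on its left. -/
def IsStrictlySupportingEdge (v : Fin n → Pt) (i : Fin n) : Prop :=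
  ∀ j, j ≠ i → j ≠ i + 1 → 0 < side (v i) (v (i + 1)) (v j)

theorem IsSimplePolygon.isStrictlySupportingEdge_of_forall_mem (h : IsSimplePolygon v)
    (hconv : ∀ i, StrictlyConvexAt v i) {C : Set Pt} (hC : Convex ℝ C) (hvC : ∀ j, v j ∈ C)
    {i : Fin n} (hback : ∀ t : ℝ, AffineMap.lineMap (v (i + 1)) (v i) t ∈ C → t ≤ 1) :
    IsStrictlySupportingEdge v i := by
  intro j hji hji'
  have hzero : i + Fin.ofNat n 0 = i := by simp
  have hone : i + Fin.ofNat n (0 + 1) = i + 1 := by rw [add_ofNat_succ, hzero]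
  obtain ⟨k, hk, rfl⟩ := exists_add_ofNat_eq i j
  obtain ⟨m, rfl⟩ : ∃ m, k = m + 2 := by
    match k with
    | 0 => exact absurd hzero hji
    | 1 => exact absurd hone hji'
    | m + 2 => exact ⟨m, rfl⟩
  have hpos := (h.isLeftTurningPath hconv i).side_pos hC (i := 0) (m := m + 1) (by omega)
    (by omega) (fun _ _ _ => hvC _)
    (by simpa only [hzero, hone] using hback) (right_mem_segment ℝ _ _) (hvC _)
    (by simpa only [hone] using h.2.1.ne hji')
  simpa only [hzero, hone] using hpos

theorem IsStrictlySupportingEdge.side_nonneg {i : Fin n} (h : IsStrictlySupportingEdge v i)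
    {x : Pt} (hx : x ∈ convexHull ℝ (Set.range v)) : 0 ≤ side (v i) (v (i + 1)) x := by
  refine convexHull_min (Set.range_subset_iff.2 fun j => ?_)
    (convex_setOf_side_nonneg (v i) (v (i + 1))) hx
  rcases eq_or_ne j i with rfl | hji
  · exact (side_self_left _ _).ge
  rcases eq_or_ne j (i + 1) with rfl | hji'
  · exact (side_self_right _ _).ge
  exact (h j hji hji').le

/-- An edge starting at an extreme point of the hull cannot be extended backwards in the hull. -/
theorem IsSimplePolygon.exists_isStrictlySupportingEdge (h : IsSimplePolygon v)
    (hconv : ∀ i, StrictlyConvexAt v i) : ∃ i, IsStrictlySupportingEdge v i := by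
  have hcompact : IsCompact (convexHull ℝ (Set.range v)) :=
    (Set.finite_range v).isCompact_convexHull (𝕜 := ℝ)
  obtain ⟨x, hx⟩ := hcompact.extremePoints_nonempty ⟨v 0, mem_convexHull_range v 0⟩
  obtain ⟨i, rfl⟩ := extremePoints_convexHull_subset hx
  have hne : v i ≠ v (i + 1) := ne_of_side_pos (strictlyConvexAt_add_one.1 (hconv (i + 1)))
  refine ⟨i, h.isStrictlySupportingEdge_of_forall_mem hconv (convex_convexHull ℝ _)
    (mem_convexHull_range v) fun t ht => ?_⟩
  by_contra! htlt
  have hopen : v i ∈ openSegment ℝ (v (i + 1)) (AffineMap.lineMap (v (i + 1)) (v i) t) := by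
    convert lineMap_mem_openSegment ℝ (v (i + 1)) (AffineMap.lineMap (v (i + 1)) (v i) t)
      (t := t⁻¹) ⟨inv_pos.2 (by linarith), inv_lt_one_of_one_lt₀ htlt⟩
    rw [AffineMap.lineMap_lineMap_right, inv_mul_cancel₀ (by linarith), AffineMap.lineMap_apply_one]
  exact hne (hx.2 (mem_convexHull_range v (i + 1)) ht hopen).symm

theorem IsSimplePolygon.isStrictlySupportingEdge_add_one (h : IsSimplePolygon v)
    (hconv : ∀ i, StrictlyConvexAt v i) {i : Fin n} (hi : IsStrictlySupportingEdge v i) :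
    IsStrictlySupportingEdge v (i + 1) :=
  h.isStrictlySupportingEdge_of_forall_mem hconv (convex_setOf_side_nonneg (v i) (v (i + 1)))
    (fun k => hi.side_nonneg (mem_convexHull_range v k))
    fun _ => lineMap_le_one_of_side_nonneg (strictlyConvexAt_add_one.1 (hconv (i + 1)))

/-- The vertices of `v` are in strictly convex position and listed counterclockwise. -/
def IsStrictlyConvexPolygon (v : Fin n → Pt) : Prop := ∀ i, IsStrictlySupportingEdge v i

theorem IsSimplePolygon.isStrictlyConvexPolygon (h : IsSimplePolygon v)
    (hconv : ∀ i, StrictlyConvexAt v i) : IsStrictlyConvexPolygon v := by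
  obtain ⟨i₀, hi₀⟩ := h.exists_isStrictlySupportingEdge hconv
  intro i
  obtain ⟨k, -, rfl⟩ := exists_add_ofNat_eq i₀ i
  induction k with
  | zero => simpa using hi₀
  | succ k ih =>
    rw [add_ofNat_succ]
    exact h.isStrictlySupportingEdge_add_one hconv ih

/-! ### The region of a strictly convex polygon -/

/-- The intersection of the closed half-planes to the left of the edges. -/
def leftRegion (v : Fin n → Pt) : Set Pt := {x | ∀ i, 0 ≤ side (v i) (v (i + 1)) x}

/-- At a vertex where a separating functional is maximal, Cramer's rule for the two adjacent edges
contradicts the separation. -/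
theorem leftRegion_subset_convexHull (hconv : ∀ i, StrictlyConvexAt v i) :
    leftRegion v ⊆ convexHull ℝ (Set.range v) := by
  intro x hx
  by_contra hxv
  obtain ⟨φ, u, hφ, hux⟩ := geometric_hahn_banach_closed_point (convex_convexHull ℝ _)
    ((Set.finite_range v).isClosed_convexHull ℝ) hxv
  obtain ⟨j, hj⟩ := Finite.exists_max fun j => φ (v j)
  obtain ⟨i, rfl⟩ : ∃ i, i + 1 = j := ⟨j - 1, sub_add_cancel _ _⟩
  have hcramer := congrArg φ (side_smul_sub (v i) (v (i + 1)) (v (i + 1 + 1)) x)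
  simp only [map_smul, map_sub, map_add, smul_eq_mul] at hcramer
  have hpos := mul_pos (strictlyConvexAt_add_one.1 (hconv (i + 1)))
    (sub_pos.2 ((hφ _ (mem_convexHull_range v (i + 1))).trans hux))
  have h₁ := mul_nonpos_of_nonneg_of_nonpos (hx i) (sub_nonpos.2 (hj (i + 1 + 1)))
  have h₂ := mul_nonpos_of_nonneg_of_nonpos (hx (i + 1)) (sub_nonpos.2 (hj i))
  linarith

theorem mem_polyBoundary_of_mem_leftRegion (hconv : ∀ i, StrictlyConvexAt v i) {x : Pt}
    (hx : x ∈ leftRegion v) {i : Fin n} (hi : side (v i) (v (i + 1)) x = 0) :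
    x ∈ polyBoundary v := by
  obtain ⟨k, rfl⟩ : ∃ k, k + 1 = i := ⟨i - 1, sub_add_cancel _ _⟩
  have hk := strictlyConvexAt_add_one.1 (hconv (k + 1))
  have hk' := strictlyConvexAt_add_one.1 (hconv (k + 1 + 1))
  exact Set.mem_iUnion.2 ⟨k + 1, mem_segment_of_affine_nonneg hi
    (side_self_right _ _) hk (hx k) (side_self_left _ _) (side_rotate _ _ _ ▸ hk')
    (hx (k + 1 + 1))⟩

theorem leftRegion_subset_polyRegion (hconv : ∀ i, StrictlyConvexAt v i) :
    leftRegion v ⊆ polyRegion v := by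
  intro x hx
  by_cases hxb : x ∈ polyBoundary v
  · exact .inl hxb
  refine .inr ⟨hxb, ((Set.finite_range v).isCompact_convexHull (𝕜 := ℝ)).isBounded.subset
    (Set.Subset.trans ?_ (leftRegion_subset_convexHull hconv))⟩
  have hclosed : IsClosed (leftRegion v) := by
    simp only [leftRegion, Set.ofPred_forall]
    exact isClosed_iInter fun i => isClosed_le continuous_const (continuous_side _ _)
  have hopen : IsOpen {y | ∀ i, 0 < side (v i) (v (i + 1)) y} := by
    simp only [Set.ofPred_forall]
    exact isOpen_iInter_of_finite fun i => isOpen_lt continuous_const (continuous_side _ _)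
  have hpos : ∀ y ∈ leftRegion v, y ∉ polyBoundary v → ∀ i, 0 < side (v i) (v (i + 1)) y :=
    fun y hy hyb i => (hy i).lt_of_ne' fun h => hyb (mem_polyBoundary_of_mem_leftRegion hconv hy h)
  refine (isPreconnected_connectedComponentIn.subset_left_of_subset_union hopen hclosed.isOpen_compl
    ?_ (fun y hy => ?_) ⟨x, mem_connectedComponentIn hxb, hpos x hx hxb⟩).trans
      fun y hy i => (hy i).le
  · exact Set.disjoint_left.2 fun y hy hy' => hy' fun i => (hy i).le
  · have hyb : y ∉ polyBoundary v := connectedComponentIn_subset _ _ hy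
    by_cases hyl : y ∈ leftRegion v
    exacts [.inl (hpos y hyl hyb), .inr hyl]

theorem polyBoundary_subset_convexHull (v : Fin n → Pt) :
    polyBoundary v ⊆ convexHull ℝ (Set.range v) :=
  Set.iUnion_subset fun i => (convex_convexHull ℝ _).segment_subset
    (mem_convexHull_range v i) (mem_convexHull_range v (i + 1))

/-- A half-plane avoiding the polygon is unbounded and lies in a single component. -/
theorem polyRegion_subset_convexHull (v : Fin n → Pt) :
    polyRegion v ⊆ convexHull ℝ (Set.range v) := by
  refine Set.union_subset (polyBoundary_subset_convexHull v) fun x hx => ?_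
  by_contra hxv
  obtain ⟨φ, u, hφ, hux⟩ := geometric_hahn_banach_closed_point (convex_convexHull ℝ _)
    ((Set.finite_range v).isClosed_convexHull ℝ) hxv
  have hhalf : {y | u < φ y} ⊆ connectedComponentIn (polyBoundary v)ᶜ x :=
    (convex_halfSpace_gt φ.toLinearMap.isLinear u).isPreconnected.subset_connectedComponentIn hux
      fun y hy hyb => (hφ y (polyBoundary_subset_convexHull v hyb)).not_gt hy
  refine not_isBounded_setOf_lt ?_ u (hx.2.subset hhalf)
  rintro rfl
  exact (hφ _ (mem_convexHull_range v 0)).not_gt hux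

theorem IsSimplePolygon.polyRegion_eq_convexHull (h : IsSimplePolygon v)
    (hconv : ∀ i, StrictlyConvexAt v i) : polyRegion v = convexHull ℝ (Set.range v) :=
  (polyRegion_subset_convexHull v).antisymm fun _ hx =>
    leftRegion_subset_polyRegion hconv fun i =>
      (h.isStrictlyConvexPolygon hconv i).side_nonneg hx

/-! ### Cutting along a diagonal -/

theorem IsStrictlyConvexPolygon.mem_segment_of_side_eq_zero (h : IsStrictlyConvexPolygon v)
    {k l : Fin n} (hkl : k ≠ l) (hk : l ≠ k + 1) (hl : k ≠ l + 1) {z : Pt}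
    (hz : z ∈ convexHull ℝ (Set.range v)) (hside : side (v k) (v l) z = 0) :
    z ∈ segment ℝ (v k) (v l) :=
  mem_segment_of_affine_nonneg hside (side_self_left _ (v (k + 1))) (h k l hkl.symm hk)
    ((h k).side_nonneg hz) (side_self_left _ (v (l + 1))) (h l k hkl hl) ((h l).side_nonneg hz)

theorem IsStrictlyConvexPolygon.convexHull_union_eq_of_diagonal (h : IsStrictlyConvexPolygon v)
    {k l : Fin n} (hkl : k ≠ l) (hk : l ≠ k + 1) (hl : k ≠ l + 1) {A B : Set Pt}
    (hAB : A ∪ B = Set.range v) (hdA : {v k, v l} ⊆ A) (hdB : {v k, v l} ⊆ B)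
    (hA : ∀ x ∈ A, 0 ≤ side (v k) (v l) x) (hB : ∀ x ∈ B, side (v k) (v l) x ≤ 0) :
    convexHull ℝ A ∪ convexHull ℝ B = convexHull ℝ (Set.range v) := by
  rw [← hAB]
  refine (convexHull_union_eq_union_of_zeros hA hB fun z hz hside => ?_).symm
  have hzd : z ∈ convexHull ℝ {v k, v l} := by
    rw [convexHull_pair]
    exact h.mem_segment_of_side_eq_zero hkl hk hl (hAB ▸ hz) hside
  exact ⟨convexHull_mono hdA hzd, convexHull_mono hdB hzd⟩

end

theorem strictConvexQuad_iff {a b c d : Pt} :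
    StrictConvexQuad a b c d ↔
      0 < side a b c ∧ 0 < side b c d ∧ 0 < side c d a ∧ 0 < side d a b := by
  simp only [StrictConvexQuad, det2_sub_sub]

theorem StrictConvexQuad.side_nonneg {a b c d x : Pt} (h : StrictConvexQuad a b c d)
    (hx : x ∈ convexHull ℝ {a, b, c, d}) : 0 ≤ side d a x := by
  obtain ⟨-, -, hc, hb⟩ := strictConvexQuad_iff.1 h
  refine convexHull_min ?_ (convex_setOf_side_nonneg d a) hx
  rintro y (rfl | rfl | rfl | rfl)
  exacts [(side_self_right _ _).ge, hb.le, (side_rotate y d a ▸ hc).le, (side_self_left _ _).ge]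

theorem IsStrictlyConvexPolygon.strictConvexQuad {v : Fin 6 → Pt} (h : IsStrictlyConvexPolygon v)
    (i : Fin 6) : StrictConvexQuad (v i) (v (i + 1)) (v (i + 2)) (v (i + 3)) := by
  have hpos : ∀ a b c : Fin 6, b = a + 1 → c ≠ a → c ≠ b → 0 < side (v a) (v b) (v c) := by
    rintro a _ c rfl
    exact h a c
  rw [strictConvexQuad_iff, side_rotate (v (i + 3))]
  refine ⟨hpos _ _ _ ?_ ?_ ?_, hpos _ _ _ ?_ ?_ ?_, hpos _ _ _ ?_ ?_ ?_, hpos _ _ _ ?_ ?_ ?_⟩ <;>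
    clear h hpos <;> decide +revert

theorem IsStrictlyConvexPolygon.strictConvexQuad_opposite {v : Fin 6 → Pt}
    (h : IsStrictlyConvexPolygon v) (i : Fin 6) :
    StrictConvexQuad (v (i + 3)) (v (i + 4)) (v (i + 5)) (v i) := by
  have hquad := h.strictConvexQuad (i + 3)
  rwa [show i + 3 + 1 = i + 4 from add_assoc i 3 1, show i + 3 + 2 = i + 5 from add_assoc i 3 2,
    show i + 3 + 3 = i from (add_assoc i 3 3).trans (add_zero i)] at hquad

theorem halves_union_eq_range {α : Type*} (v : Fin 6 → α) (i : Fin 6) :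
    ({v i, v (i + 1), v (i + 2), v (i + 3)} ∪ {v (i + 3), v (i + 4), v (i + 5), v i} : Set α) =
      Set.range v := by
  have hindex : ∀ j : Fin 6,
      j = i ∨ j = i + 1 ∨ j = i + 2 ∨ j = i + 3 ∨ j = i + 4 ∨ j = i + 5 := by decide +revert
  refine Set.Subset.antisymm (by simp [Set.insert_subset_iff]) ?_
  rintro _ ⟨j, rfl⟩
  rcases hindex j with rfl | rfl | rfl | rfl | rfl | rfl <;> simp

theorem convex_hexagon_splits_into_two_convex_quads_general (v : Fin 6 → Pt)
    (hsimple : IsSimplePolygon v) (hconv : ∀ i : Fin 6, StrictlyConvexAt v i) (i : Fin 6) :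
    StrictConvexQuad (v i) (v (i + 1)) (v (i + 2)) (v (i + 3)) ∧
      StrictConvexQuad (v (i + 3)) (v (i + 4)) (v (i + 5)) (v i) ∧
      convexHull ℝ {v i, v (i + 1), v (i + 2), v (i + 3)} ∪
        convexHull ℝ {v (i + 3), v (i + 4), v (i + 5), v i} = polyRegion v ∧
      interior (convexHull ℝ {v i, v (i + 1), v (i + 2), v (i + 3)}) ∩
        interior (convexHull ℝ {v (i + 3), v (i + 4), v (i + 5), v i}) = ∅ := by
  have hchord : i + 3 ≠ i ∧ i ≠ i + 3 + 1 ∧ i + 3 ≠ i + 1 := by decide +revert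
  have hpoly := hsimple.isStrictlyConvexPolygon hconv
  have hQ := hpoly.strictConvexQuad i
  have hQ' := hpoly.strictConvexQuad_opposite i
  have hleft : ∀ x ∈ convexHull ℝ {v i, v (i + 1), v (i + 2), v (i + 3)},
      0 ≤ side (v (i + 3)) (v i) x := fun _ => hQ.side_nonneg
  have hright : ∀ x ∈ convexHull ℝ {v (i + 3), v (i + 4), v (i + 5), v i},
      side (v (i + 3)) (v i) x ≤ 0 := fun _ hx => by
    rw [side_swap]
    exact neg_nonpos.2 (hQ'.side_nonneg hx)
  refine ⟨hQ, hQ', ?_, interior_inter_interior_eq_empty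
    (isOpenMap_side (hsimple.2.1.ne hchord.1)) hleft hright⟩
  rw [hsimple.polyRegion_eq_convexHull hconv]
  exact hpoly.convexHull_union_eq_of_diagonal hchord.1 hchord.2.1 hchord.2.2
    (halves_union_eq_range v i) (by simp [Set.insert_subset_iff])
    (by simp [Set.insert_subset_iff])
    (fun x hx => hleft x (subset_convexHull ℝ _ hx))
    (fun x hx => hright x (subset_convexHull ℝ _ hx))

/-- A strictly convex hexagon can be partitioned into two strictly convex
quadrilaterals by one of its main diagonals, with no Steiner points. -/
theorem convex_hexagon_splits_into_two_convex_quads (v : Fin 6 → Pt)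
    (hsimple : IsSimplePolygon v) (hccw : IsCCW v)
    (hconv : ∀ i : Fin 6, StrictlyConvexAt v i) :
    ∃ i : Fin 6,
      StrictConvexQuad (v i) (v (i + 1)) (v (i + 2)) (v (i + 3)) ∧
      StrictConvexQuad (v (i + 3)) (v (i + 4)) (v (i + 5)) (v i) ∧
      convexHull ℝ {v i, v (i + 1), v (i + 2), v (i + 3)} ∪
        convexHull ℝ {v (i + 3), v (i + 4), v (i + 5), v i} = polyRegion v ∧
      interior (convexHull ℝ {v i, v (i + 1), v (i + 2), v (i + 3)}) ∩
        interior (convexHull ℝ {v (i + 3), v (i + 4), v (i + 5), v i}) = ∅ :=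
  ⟨0, convex_hexagon_splits_into_two_convex_quads_general v hsimple hconv 0⟩
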